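/- There is a K-algebra automorphism of R = K[x_1,x_2,x_3,y_1,…,y_5] fixing x_1, x_2, x_3 and permuting the variables y_1,…,y_5 that maps I_{λ−μ} onto I_{λ'−μ'} (so the two generalized Ferrers ideals are isomorphic), but the graphs Ḡ_{λ−μ} and Ḡ_{λ'−μ'} are not isomorphic: there is no graph isomorphism between them. (Indeed, Ḡ_{λ'−μ'} has two vertices of degree two, whereas Ḡ_{λ−μ} has no vertex of degree two.) -/

import Mathlib

open MvPolynomial Sum

/-- With `λ = (5,4,4)`, `μ = (1,2,3)`, `λ' = (5,5,5)`,
`μ' = (1,3,4)`, there is a `K`-algebra automorphism of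
`R = K[x_1,x_2,x_3,y_1,…,y_5]` fixing the `x`'s and permuting the `y`'s that
maps `I_{λ−μ}` onto `I_{λ'−μ'}`, yet the specialized graphs `Ḡ_{λ−μ}` and
`Ḡ_{λ'−μ'}` are not isomorphic.
Here `inl k` is `x_{k+1}` and `inr k` is `y_{k+1}`; the graphs are on `Fin 5`
with vertex `v` standing for `v.val + 1`. -/
theorem generalized_ferrers_iso_but_specializations_not_iso
    (K : Type*) [Field K] :
    (∃ π : Equiv.Perm (Fin 5),
      Ideal.map
        (MvPolynomial.renameEquiv K (Equiv.sumCongr (Equiv.refl (Fin 3)) π) :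
          MvPolynomial (Fin 3 ⊕ Fin 5) K ≃ₐ[K] MvPolynomial (Fin 3 ⊕ Fin 5) K)
        (Ideal.span
          ({X (inl 0) * X (inr 1), X (inl 0) * X (inr 2), X (inl 0) * X (inr 3),
            X (inl 0) * X (inr 4), X (inl 1) * X (inr 2), X (inl 1) * X (inr 3),
            X (inl 2) * X (inr 3)} : Set (MvPolynomial (Fin 3 ⊕ Fin 5) K))) =
      Ideal.span
        ({X (inl 0) * X (inr 1), X (inl 0) * X (inr 2), X (inl 0) * X (inr 3),
          X (inl 0) * X (inr 4), X (inl 1) * X (inr 3), X (inl 1) * X (inr 4),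
          X (inl 2) * X (inr 4)} : Set (MvPolynomial (Fin 3 ⊕ Fin 5) K))) ∧
    IsEmpty
      ((SimpleGraph.fromRel fun i j : Fin 5 =>
          (i.val, j.val) ∈ [(0,1),(0,2),(0,3),(0,4),(1,2),(1,3),(2,3)]) ≃g
       (SimpleGraph.fromRel fun i j : Fin 5 =>
          (i.val, j.val) ∈ [(0,1),(0,2),(0,3),(0,4),(1,3),(1,4),(2,4)])) := by
  constructor
  · -- the permutation `y_3 ↦ y_4 ↦ y_5 ↦ y_3`
    refine ⟨Equiv.swap 2 3 * Equiv.swap 3 4, ?_⟩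
    have h1 : (Equiv.swap 2 3 * Equiv.swap 3 4 : Equiv.Perm (Fin 5)) 1 = 1 := by decide
    have h2 : (Equiv.swap 2 3 * Equiv.swap 3 4 : Equiv.Perm (Fin 5)) 2 = 3 := by decide
    have h3 : (Equiv.swap 2 3 * Equiv.swap 3 4 : Equiv.Perm (Fin 5)) 3 = 4 := by decide
    have h4 : (Equiv.swap 2 3 * Equiv.swap 3 4 : Equiv.Perm (Fin 5)) 4 = 2 := by decide
    generalize (Equiv.swap 2 3 * Equiv.swap 3 4 : Equiv.Perm (Fin 5)) = π at h1 h2 h3 h4 ⊢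
    rw [Ideal.map_span]
    congr 1
    simp only [Set.image_insert_eq, Set.image_singleton, map_mul,
      MvPolynomial.renameEquiv_apply, MvPolynomial.rename_X, Equiv.sumCongr_apply,
      Sum.map_inl, Sum.map_inr, Equiv.coe_refl, id, h1, h2, h3, h4]
    ext p
    simp only [Set.mem_insert_iff, Set.mem_singleton_iff]
    tauto
  · -- vertex `5` of the first graph has degree one; the second graph has no such vertex
    refine ⟨fun f => ?_⟩
    have key : ∀ v w : Fin 5, ¬ ∀ b : Fin 5,
        (SimpleGraph.fromRel fun i j : Fin 5 =>
          (i.val, j.val) ∈ [(0,1),(0,2),(0,3),(0,4),(1,3),(1,4),(2,4)]).Adj v b → b = w := by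
      simp only [SimpleGraph.fromRel_adj]
      decide
    have leaf : ∀ b : Fin 5,
        (SimpleGraph.fromRel fun i j : Fin 5 =>
          (i.val, j.val) ∈ [(0,1),(0,2),(0,3),(0,4),(1,2),(1,3),(2,3)]).Adj 4 b → b = 0 := by
      simp only [SimpleGraph.fromRel_adj]
      decide
    refine key (f 4) (f 0) fun b hb => ?_
    obtain ⟨a, rfl⟩ := f.surjective b
    rw [leaf a (f.map_adj_iff.mp hb)]
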